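/- Let V be a finite-dimensional real inner product space with dim V = n+1 ≥ 2, B a topological space and k ≥ 1. Suppose there exist open sets V_1, …, V_k covering B × S(V) and continuous maps ψ_i : [−1,1] × V_i → S(V) such that ψ_i(1,(b,u)) = u and ψ_i(−1,(b,u)) = −u for all (b,u) ∈ V_i. Then there exist open sets U_0, U_1, …, U_k covering B × S(V) × S(V) and continuous maps φ_i : [−1,1] × U_i → S(V) such that φ_i(1,(b,u,v)) = u and φ_i(−1,(b,u,v)) = v for all (b,u,v) ∈ U_i, and φ_i(t,(b,u,u)) = u for all t ∈ [−1,1] whenever (b,u,u) ∈ U_i. -/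

import Mathlib

open scoped RealInnerProductSpace

/-!
Two maps `f`, `g` into a unit sphere are homotopic wherever `f ≠ -g`: project the straight-line
homotopy radially; where `f = g` this homotopy is stationary. On pairs `(u, v)` with `v ≠ -u` this
gives the planner from `v` to `u` that fixes the diagonal. A pair with `v = -u` has `v ≠ u = -(-u)`,
so off the diagonal one can move from `v` to `-u` in the same way, and then follow a given rule from
`-u` to `u`.
-/

open Set Metric ContinuousMap

section MotionPlanner

variable {X Y Z : Type*} [TopologicalSpace X] [TopologicalSpace Y] [TopologicalSpace Z]

theorem homotopic_restrict_comp {f g : C(X, Y)} {W : Set X}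
    (h : (f.restrict W).Homotopic (g.restrict W)) (q : C(Z, X)) {U : Set Z} (hq : MapsTo q U W) :
    ((f.comp q).restrict U).Homotopic ((g.comp q).restrict U) :=
  h.comp (.refl ⟨hq.restrict, q.continuous.restrict hq⟩)

/-- `φ` is a motion planner over `U` from `f` to `g`, stationary on `S`. Time runs over
`[-1, 1]`; the values of `φ` outside `[-1, 1] × U` are irrelevant. -/
structure IsMotionPlannerOn (φ : ℝ × X → Y) (f g : C(X, Y)) (S U : Set X) : Prop where
  continuousOn : ContinuousOn φ (Icc (-1) 1 ×ˢ U)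
  apply_one : ∀ x ∈ U, φ (1, x) = g x
  apply_neg_one : ∀ x ∈ U, φ (-1, x) = f x
  stationary : ∀ x ∈ U, x ∈ S → ∀ t ∈ Icc (-1 : ℝ) 1, φ (t, x) = g x

variable {f g : C(X, Y)} {S U : Set X} {φ : ℝ × X → Y}

theorem IsMotionPlannerOn.homotopicRel (hφ : IsMotionPlannerOn φ f g S U) :
    (f.restrict U).HomotopicRel (g.restrict U) (Subtype.val ⁻¹' S) := by
  have two_mul_sub_one_mem (t : unitInterval) : 2 * (t : ℝ) - 1 ∈ Icc (-1 : ℝ) 1 :=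
    ⟨by linarith [t.2.1], by linarith [t.2.2]⟩
  refine ⟨⟨⟨⟨fun p ↦ φ (2 * (p.1 : ℝ) - 1, p.2), ?_⟩, fun x ↦ ?_, fun x ↦ ?_⟩, fun t x hx ↦ ?_⟩⟩
  · exact hφ.continuousOn.comp_continuous (by fun_prop) fun p ↦ ⟨two_mul_sub_one_mem p.1, p.2.2⟩
  · simpa using hφ.apply_neg_one x x.2
  · norm_num [hφ.apply_one x x.2]
  · have hfg : f x = g x :=
      (hφ.apply_neg_one x x.2).symm.trans (hφ.stationary x x.2 hx (-1) (by norm_num))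
    exact (hφ.stationary x x.2 hx _ (two_mul_sub_one_mem t)).trans hfg.symm

theorem exists_isMotionPlannerOn_of_homotopicRel
    (h : (f.restrict U).HomotopicRel (g.restrict U) (Subtype.val ⁻¹' S)) :
    ∃ φ, IsMotionPlannerOn φ f g S U := by
  classical
  obtain ⟨H⟩ := h
  let φ : ℝ × X → Y := fun p ↦
    if hp : p.2 ∈ U then H.extend ((p.1 + 1) / 2) ⟨p.2, hp⟩ else g p.2
  have φ_apply (t : ℝ) {x : X} (hx : x ∈ U) : φ (t, x) = H.extend ((t + 1) / 2) ⟨x, hx⟩ :=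
    dif_pos hx
  refine ⟨φ, ?_, fun x hx ↦ ?_, fun x hx ↦ ?_, fun x hx hxS t _ ↦ ?_⟩
  · rw [continuousOn_iff_continuous_domRestrict]
    have restrict_eq : (Icc (-1) 1 ×ˢ U).domRestrict φ =
        fun p ↦ H.extend ((p.1.1 + 1) / 2) ⟨p.1.2, p.2.2⟩ :=
      funext fun p ↦ φ_apply _ p.2.2
    rw [restrict_eq]
    exact H.continuous.comp ((continuous_projIcc.comp (by fun_prop)).prodMk (by fun_prop))
  · simp [φ_apply, hx]
  · simp [φ_apply, hx]
  · rw [φ_apply t hx]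
    exact H.eq_snd _ hxS

end MotionPlanner

section UnitSphere

variable {V X Z : Type*} [NormedAddCommGroup V] [NormedSpace ℝ V] [TopologicalSpace X]
  [TopologicalSpace Z]

theorem lineMap_ne_zero_of_norm_eq {x y : V} (hnorm : ‖x‖ = ‖y‖) (hne : x ≠ -y) {t : ℝ}
    (ht : t ∈ Icc (0 : ℝ) 1) : AffineMap.lineMap x y t ≠ 0 := by
  intro h0
  have h_seg : (0 : V) ∈ segment ℝ x y := by
    rw [segment_eq_image_lineMap]
    exact ⟨t, ht, h0⟩
  have h_ray : SameRay ℝ (-x) y := by simpa using mem_segment_iff_sameRay.1 h_seg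
  rcases eq_or_ne y 0 with rfl | hy
  · exact hne (by simpa using hnorm)
  · exact hne (neg_eq_iff_eq_neg.1 (norm_injOn_ray_right hy h_ray .rfl (by simpa using hnorm)))

theorem homotopicRel_of_ne_neg {f g : C(X, sphere (0 : V) 1)} (h : ∀ x, f x ≠ -g x) :
    f.HomotopicRel g {x | f x = g x} := by
  let chord := Homotopy.affine (X := X) (E := V)
    ⟨fun x ↦ (f x : V), by fun_prop⟩ ⟨fun x ↦ (g x : V), by fun_prop⟩
  have chord_ne_zero (p : unitInterval × X) : chord p ≠ 0 :=
    lineMap_ne_zero_of_norm_eq (by simp) (fun e ↦ h p.2 (Subtype.ext e)) p.1.2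
  have radial_eq {p : unitInterval × X} {w : sphere (0 : V) 1} (e : chord p = w) :
      (homeomorphUnitSphereProd V ⟨chord p, chord_ne_zero p⟩).1 = w :=
    Subtype.ext (by simp [e])
  refine ⟨⟨⟨⟨fun p ↦ (homeomorphUnitSphereProd V ⟨chord p, chord_ne_zero p⟩).1, ?_⟩,
    fun x ↦ radial_eq (chord.apply_zero x), fun x ↦ radial_eq (chord.apply_one x)⟩,
    fun t x hx ↦ radial_eq ?_⟩⟩
  · fun_prop
  · have hfg : f x = g x := hx
    simp [chord, hfg]

theorem exists_isMotionPlannerOn_of_ne_neg {f g : C(X, sphere (0 : V) 1)} {U : Set X}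
    (h : ∀ x ∈ U, f x ≠ -g x) : ∃ φ, IsMotionPlannerOn φ f g {x | f x = g x} U :=
  exists_isMotionPlannerOn_of_homotopicRel (homotopicRel_of_ne_neg fun x ↦ h x x.2)

theorem IsMotionPlannerOn.exists_of_antipodal {f : C(X, sphere (0 : V) 1)} {W : Set X}
    {ψ : ℝ × X → sphere (0 : V) 1} (hψ : IsMotionPlannerOn ψ (-f) f ∅ W) (q : C(Z, X))
    {g : C(Z, sphere (0 : V) 1)} {U : Set Z} (hq : MapsTo q U W) (h : ∀ z ∈ U, g z ≠ f (q z)) :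
    ∃ φ, IsMotionPlannerOn φ g (f.comp q) {z | g z = f (q z)} U := by
  have to_antipode : (g.restrict U).Homotopic (((-f).comp q).restrict U) :=
    (homotopicRel_of_ne_neg fun z ↦ by simpa using h z z.2).homotopic
  have reversal : (((-f).comp q).restrict U).Homotopic ((f.comp q).restrict U) :=
    homotopic_restrict_comp hψ.homotopicRel.homotopic q hq
  obtain ⟨φ, hφ⟩ := exists_isMotionPlannerOn_of_homotopicRel (S := ∅)
    (homotopicRel_empty.2 (to_antipode.trans reversal))
  exact ⟨φ, { hφ with stationary := fun z hz hzS ↦ absurd hzS (h z hz) }⟩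

end UnitSphere

theorem stmt3_general {V : Type*} [NormedAddCommGroup V] [NormedSpace ℝ V]
    {B : Type*} [TopologicalSpace B] {ι : Type*}
    (W : ι → Set (B × sphere (0 : V) 1))
    (ψ : ι → ℝ × (B × sphere (0 : V) 1) → sphere (0 : V) 1)
    (hWopen : ∀ i, IsOpen (W i))
    (hWcover : (⋃ i, W i) = univ)
    (hψcont : ∀ i, ContinuousOn (ψ i) (Icc (-1 : ℝ) 1 ×ˢ W i))
    (hψ1 : ∀ i, ∀ p ∈ W i, ψ i (1, p) = p.2)
    (hψ2 : ∀ i, ∀ p ∈ W i, ψ i (-1, p) = -p.2) :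
    ∃ (U : Option ι → Set (B × sphere (0 : V) 1 × sphere (0 : V) 1))
      (φ : Option ι → ℝ × (B × sphere (0 : V) 1 × sphere (0 : V) 1) → sphere (0 : V) 1),
      (∀ i, IsOpen (U i)) ∧
      (⋃ i, U i) = univ ∧
      (∀ i, ContinuousOn (φ i) (Icc (-1 : ℝ) 1 ×ˢ U i)) ∧
      (∀ i, ∀ p ∈ U i, φ i (1, p) = p.2.1) ∧
      (∀ i, ∀ p ∈ U i, φ i (-1, p) = p.2.2) ∧
      (∀ i, ∀ p ∈ U i, p.2.1 = p.2.2 → ∀ t ∈ Icc (-1 : ℝ) 1, φ i (t, p) = p.2.1) := by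
  let E := B × sphere (0 : V) 1 × sphere (0 : V) 1
  let q : C(E, B × sphere (0 : V) 1) := ⟨fun p ↦ (p.1, p.2.1), by fun_prop⟩
  let v : C(E, sphere (0 : V) 1) := ⟨fun p ↦ p.2.2, by fun_prop⟩
  let U : Option ι → Set E
    | none => {p | p.2.2 ≠ -p.2.1}
    | some i => q ⁻¹' W i ∩ {p | p.2.2 ≠ p.2.1}
  have U_open : ∀ i, IsOpen (U i)
    | none => isOpen_ne_fun (by fun_prop) (by fun_prop)
    | some i => ((hWopen i).preimage q.continuous).inter
        (isOpen_ne_fun (by fun_prop) (by fun_prop))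
  have U_cover (p : E) : ∃ i, p ∈ U i := by
    by_cases hp : p.2.2 = -p.2.1
    · obtain ⟨i, hi⟩ := mem_iUnion.1 (hWcover ▸ mem_univ (q p))
      exact ⟨some i, hi, fun e ↦ ne_neg_of_mem_unit_sphere ℝ p.2.1 (e.symm.trans hp)⟩
    · exact ⟨none, hp⟩
  have planner : ∀ i, ∃ φ, IsMotionPlannerOn φ v (snd.comp q) {p | p.2.2 = p.2.1} (U i)
    | none => exists_isMotionPlannerOn_of_ne_neg fun _ hp ↦ hp
    | some i => IsMotionPlannerOn.exists_of_antipodal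
        ⟨hψcont i, hψ1 i, hψ2 i, fun _ _ h ↦ h.elim⟩ q (fun _ hp ↦ hp.1) fun _ hp ↦ hp.2
  choose φ hφ using planner
  exact ⟨U, φ, U_open, iUnion_eq_univ_iff.2 U_cover, fun i ↦ (hφ i).continuousOn,
    fun i ↦ (hφ i).apply_one, fun i ↦ (hφ i).apply_neg_one,
    fun i p hp hdiag ↦ (hφ i).stationary p hp hdiag.symm⟩

/-- Theorem 2.2, implication (2) ⟹ (3), for a trivialized bundle: from fibrewise
motion planning rules reversing the antipodal map one constructs fibrewise motion
planners fixing the diagonal. -/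
theorem stmt3 {V : Type*} [NormedAddCommGroup V] [InnerProductSpace ℝ V]
    [FiniteDimensional ℝ V] {n : ℕ} (hn : 1 ≤ n) (hdim : Module.finrank ℝ V = n + 1)
    {B : Type*} [TopologicalSpace B] {k : ℕ} (hk : 1 ≤ k)
    (W : Fin k → Set (B × Metric.sphere (0 : V) 1))
    (ψ : Fin k → ℝ × (B × Metric.sphere (0 : V) 1) → Metric.sphere (0 : V) 1)
    (hWopen : ∀ i, IsOpen (W i))
    (hWcover : (⋃ i, W i) = Set.univ)
    (hψcont : ∀ i, ContinuousOn (ψ i) (Set.Icc (-1 : ℝ) 1 ×ˢ W i))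
    (hψ1 : ∀ i, ∀ p ∈ W i, ψ i (1, p) = p.2)
    (hψ2 : ∀ i, ∀ p ∈ W i, ψ i (-1, p) = -p.2) :
    ∃ (U : Fin (k + 1) → Set (B × Metric.sphere (0 : V) 1 × Metric.sphere (0 : V) 1))
      (φ : Fin (k + 1) → ℝ × (B × Metric.sphere (0 : V) 1 × Metric.sphere (0 : V) 1) →
        Metric.sphere (0 : V) 1),
      (∀ i, IsOpen (U i)) ∧
      (⋃ i, U i) = Set.univ ∧
      (∀ i, ContinuousOn (φ i) (Set.Icc (-1 : ℝ) 1 ×ˢ U i)) ∧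
      (∀ i, ∀ p ∈ U i, φ i (1, p) = p.2.1) ∧
      (∀ i, ∀ p ∈ U i, φ i (-1, p) = p.2.2) ∧
      (∀ i, ∀ p ∈ U i, p.2.1 = p.2.2 → ∀ t ∈ Set.Icc (-1 : ℝ) 1, φ i (t, p) = p.2.1) := by
  obtain ⟨U, φ, hUopen, hUcover, hφcont, hφ1, hφ2, hφdiag⟩ :=
    stmt3_general W ψ hWopen hWcover hψcont hψ1 hψ2
  exact ⟨U ∘ finSuccEquiv k, φ ∘ finSuccEquiv k, fun _ ↦ hUopen _,
    ((finSuccEquiv k).surjective.iUnion_comp U).trans hUcover,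
    fun _ ↦ hφcont _, fun _ ↦ hφ1 _, fun _ ↦ hφ2 _, fun _ ↦ hφdiag _⟩
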